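/- arXiv:0705.2404 — 3 statements merged into one kernel-verified Lean document; each statement's English description precedes it below -/
import Mathlib

section
/- Let G be a nonempty position of the octal game 0.26, let H = H_k be a heap of maximal size appearing in G, and let X be G with one copy of H_k removed (so G = X + H). Then G is a misère P-position if and only if one of the following holds: (i) t(G) = 0 and g(G) = 1; (ii) t(G) ≠ 0, w(H) ≤ t(X), and g(G) = 0; or (iii) t(G) ≠ 0, w(H) ≥ t(X) + 2, and g(G) = 2. -/
/-!
The normal-play value of a heap `k ≥ 1` is `(k - 1) % 4`, so the Grundy value of a position is
the nim-sum of these two-bit numbers (`grundy_eq_nimVal`). Removing two beans without splitting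
flips only the high bit; removing one bean from an even heap, or splitting with an even part,
flips only the low bit; removing one bean from an odd heap, or splitting into two odd parts,
flips both.

Call a heap `h` of `G` dominant if `w h > t (G - h)`. A position is `Tame` if it has no dominant
heap and `Wild` if some heap satisfies `w h ≥ t (G - h) + 2`; in between lie the positions with
`w h = t (G - h) + 1`. Whenever `w h ≠ 0` one has `w h < t h`, and `t` is monotone there, so only
a largest heap can be dominant (`side_le`, `tame_max`, `wild_max`). The set described in the
theorem is therefore `PSet026`: value 1 with `t = 0`, or tame of value 0 with `t ≠ 0`, or wild of
value 2 with `t ≠ 0`. It remains to verify, for an induction on the number of beans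
(`PP_iff_PSet026`), that this set has the defining property of misère P-positions.

No move joins two of its members (`not_PSet026_of_move`). A move always changes the nim value.
Passing between values 0 and 2 requires taking two beans without splitting, which changes `w` and
`t` of the heap by at most one each, too little to go from tame to wild or back. Positions
with `t = 0` have only heaps 1, 2, 5, 6, and moves into or out of them are settled by inspection.

Every position outside the set that has a heap of size at least 2 has an option in the set
(`exists_PSet026_of_not`). The option is given explicitly by the `win_` lemmas, according to the
nim value and to whether the position is tame, wild or in between. The move is mostly made on a
largest heap; when a dominant heap is present and the value is 0, it is instead made on another
heap with `t ≠ 0`, if there is one, lowering `t` to make the position wild.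
-/

/-- The minimum excludant of a set of naturals. -/
noncomputable def mex (s : Set ℕ) : ℕ := sInf {n | n ∉ s}

/-- One legal move in the octal game 0.26. -/
def Move026 (G G' : Multiset ℕ) : Prop :=
  (∃ k ∈ G, 2 ≤ k ∧ G' = (k - 1) ::ₘ G.erase k) ∨
  (∃ k ∈ G, 3 ≤ k ∧ G' = (k - 2) ::ₘ G.erase k) ∨
  (∃ k ∈ G, 4 ≤ k ∧ ∃ i j : ℕ, 1 ≤ i ∧ 1 ≤ j ∧ i + j = k - 2 ∧
    G' = i ::ₘ j ::ₘ G.erase k)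

/-- The function `t` on single heaps for 0.26. -/
def t026 (k : ℕ) : ℕ :=
  if k ≤ 2 then 0 else if k ≤ 4 then 1 else (k - 5) / 2

/-- The function `w` on single heaps for 0.26. -/
def w026 (k : ℕ) : ℕ :=
  if k ≤ 8 then 0
  else if k ≤ 10 then 1
  else if k % 2 = 1 then (k - 7) / 2
  else (k - 12) / 2

/-- `t` extended additively to positions. -/
def tPos026 (G : Multiset ℕ) : ℕ := (G.map t026).sum

/-! ### The claimed P-positions -/

/-- Sum over the heaps of the low bit of `k - 1`. -/
def lowSum (G : Multiset ℕ) : ℕ := (G.map fun k => (k + 1) % 2).sum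

/-- Sum over the heaps of the second bit of `k - 1`; for `k ≥ 1` this bit is also
that of `k + 3`, which avoids truncated subtraction. -/
def highSum (G : Multiset ℕ) : ℕ := (G.map fun k => ((k + 3) / 2) % 2).sum

/-- The nim-sum of the values `(k - 1) % 4` over the heaps `k`, written bit by bit. -/
def nimVal (G : Multiset ℕ) : ℕ := lowSum G % 2 + 2 * (highSum G % 2)

/-- No heap `h` of `G` satisfies `w h > t (G - h)`. -/
def Tame (G : Multiset ℕ) : Prop := ∀ h ∈ G, w026 h + t026 h ≤ tPos026 G

/-- Some heap `h` of `G` satisfies `w h ≥ t (G - h) + 2`. -/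
def Wild (G : Multiset ℕ) : Prop := ∃ h ∈ G, tPos026 G + 2 ≤ w026 h + t026 h

/-- The claimed set of misère P-positions, with no reference to a largest heap
and with the Grundy value replaced by its closed form. The three disjuncts are called types
(i), (ii) and (iii). -/
def PSet026 (G : Multiset ℕ) : Prop :=
  (tPos026 G = 0 ∧ nimVal G = 1) ∨
  (tPos026 G ≠ 0 ∧ Tame G ∧ nimVal G = 0) ∨
  (tPos026 G ≠ 0 ∧ Wild G ∧ nimVal G = 2)

/-! ### Arithmetic of `t`, `w` and the bit sums -/

lemma t_spec (k : ℕ) : (k ≤ 2 ∧ t026 k = 0) ∨ (3 ≤ k ∧ k ≤ 4 ∧ t026 k = 1) ∨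
    (5 ≤ k ∧ 2 * t026 k + 5 ≤ k ∧ k ≤ 2 * t026 k + 6) := by
  unfold t026; split_ifs <;> omega

lemma w_spec (k : ℕ) : (k ≤ 8 ∧ w026 k = 0) ∨ (9 ≤ k ∧ k ≤ 10 ∧ w026 k = 1) ∨
    (11 ≤ k ∧ k % 2 = 1 ∧ 2 * w026 k + 7 = k) ∨
    (11 ≤ k ∧ k % 2 = 0 ∧ 2 * w026 k + 12 = k) := by
  unfold w026; split_ifs <;> omega

lemma t_odd {k : ℕ} (h5 : 5 ≤ k) (ho : k % 2 = 1) : 2 * t026 k + 5 = k := by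
  have := t_spec k; omega

lemma t_even {k : ℕ} (h5 : 5 ≤ k) (ho : k % 2 = 0) : 2 * t026 k + 6 = k := by
  have := t_spec k; omega

lemma w_odd {k : ℕ} (h11 : 11 ≤ k) (ho : k % 2 = 1) : 2 * w026 k + 7 = k := by
  have := w_spec k; omega

lemma w_even {k : ℕ} (h11 : 11 ≤ k) (ho : k % 2 = 0) : 2 * w026 k + 12 = k := by
  have := w_spec k; omega

lemma tPos_cons (k : ℕ) (X : Multiset ℕ) : tPos026 (k ::ₘ X) = t026 k + tPos026 X := by
  simp [tPos026]

lemma lowSum_cons (k : ℕ) (X : Multiset ℕ) :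
    lowSum (k ::ₘ X) = (k + 1) % 2 + lowSum X := by
  simp [lowSum]

lemma highSum_cons (k : ℕ) (X : Multiset ℕ) :
    highSum (k ::ₘ X) = ((k + 3) / 2) % 2 + highSum X := by
  simp [highSum]

lemma t_le_tPos {y : ℕ} {X : Multiset ℕ} (hy : y ∈ X) : t026 y ≤ tPos026 X := by
  obtain ⟨Y, rfl⟩ := Multiset.exists_cons_of_mem hy
  rw [tPos_cons]; omega

lemma tame_cons (a : ℕ) (X : Multiset ℕ) : Tame (a ::ₘ X) ↔
    w026 a ≤ tPos026 X ∧ ∀ y ∈ X, w026 y + t026 y ≤ t026 a + tPos026 X := by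
  simp only [Tame, Multiset.mem_cons, forall_eq_or_imp, tPos_cons]
  constructor <;> rintro ⟨h1, h2⟩ <;> exact ⟨by omega, h2⟩

lemma wild_cons (a : ℕ) (X : Multiset ℕ) : Wild (a ::ₘ X) ↔
    tPos026 X + 2 ≤ w026 a ∨ ∃ y ∈ X, t026 a + tPos026 X + 2 ≤ w026 y + t026 y := by
  simp only [Wild, Multiset.mem_cons, exists_eq_or_imp, tPos_cons]
  refine or_congr ?_ Iff.rfl
  omega

lemma exists_pos_of_sum {f : ℕ → ℕ} {X : Multiset ℕ} (h : (X.map f).sum ≠ 0) :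
    ∃ y ∈ X, f y ≠ 0 := by
  by_contra! hc
  exact h (by rw [Multiset.sum_eq_zero]; simpa using hc)

lemma exists_t_ne {X : Multiset ℕ} (h : tPos026 X ≠ 0) : ∃ y ∈ X, t026 y ≠ 0 :=
  exists_pos_of_sum h

lemma exists_low {X : Multiset ℕ} (h : lowSum X % 2 = 1) : ∃ y ∈ X, y % 2 = 0 := by
  obtain ⟨y, hy, h'⟩ := exists_pos_of_sum (f := fun k => (k + 1) % 2) (X := X)
    (by unfold lowSum at h; omega)
  exact ⟨y, hy, by omega⟩

lemma exists_high {X : Multiset ℕ} (h : highSum X % 2 = 1) :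
    ∃ y ∈ X, ((y + 3) / 2) % 2 = 1 := by
  obtain ⟨y, hy, h'⟩ := exists_pos_of_sum (f := fun k => ((k + 3) / 2) % 2) (X := X)
    (by unfold highSum at h; omega)
  exact ⟨y, hy, by omega⟩

/-! ### Moves -/

lemma move_iff (G G' : Multiset ℕ) : Move026 G G' ↔ ∃ h Y, G = h ::ₘ Y ∧
    ((2 ≤ h ∧ G' = (h - 1) ::ₘ Y) ∨ (3 ≤ h ∧ G' = (h - 2) ::ₘ Y) ∨
      ∃ i j, 1 ≤ i ∧ 1 ≤ j ∧ i + j + 2 = h ∧ G' = i ::ₘ j ::ₘ Y) := by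
  constructor
  · rintro (⟨k, hk, h2, rfl⟩ | ⟨k, hk, h2, rfl⟩ | ⟨k, hk, h2, i, j, hi, hj, hij, rfl⟩)
    · exact ⟨k, G.erase k, (Multiset.cons_erase hk).symm, Or.inl ⟨h2, rfl⟩⟩
    · exact ⟨k, G.erase k, (Multiset.cons_erase hk).symm, Or.inr (Or.inl ⟨h2, rfl⟩)⟩
    · exact ⟨k, G.erase k, (Multiset.cons_erase hk).symm,
        Or.inr (Or.inr ⟨i, j, hi, hj, by omega, rfl⟩)⟩
  · rintro ⟨h, Y, rfl, ⟨h2, rfl⟩ | ⟨h2, rfl⟩ | ⟨i, j, hi, hj, hij, rfl⟩⟩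
    · exact Or.inl ⟨h, by simp, h2, by simp⟩
    · exact Or.inr (Or.inl ⟨h, by simp, h2, by simp⟩)
    · exact Or.inr (Or.inr ⟨h, by simp, by omega, i, j, hi, hj, by omega, by simp⟩)

lemma move_one {h : ℕ} (Y : Multiset ℕ) (h2 : 2 ≤ h) :
    Move026 (h ::ₘ Y) ((h - 1) ::ₘ Y) :=
  (move_iff _ _).2 ⟨h, Y, rfl, Or.inl ⟨h2, rfl⟩⟩

lemma move_two {h : ℕ} (Y : Multiset ℕ) (h3 : 3 ≤ h) :
    Move026 (h ::ₘ Y) ((h - 2) ::ₘ Y) :=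
  (move_iff _ _).2 ⟨h, Y, rfl, Or.inr (Or.inl ⟨h3, rfl⟩)⟩

lemma move_split {h : ℕ} (Y : Multiset ℕ) (i j : ℕ) (hi : 1 ≤ i) (hj : 1 ≤ j)
    (hij : i + j + 2 = h) : Move026 (h ::ₘ Y) (i ::ₘ j ::ₘ Y) :=
  (move_iff _ _).2 ⟨h, Y, rfl, Or.inr (Or.inr ⟨i, j, hi, hj, hij, rfl⟩)⟩

lemma move_sum {G G' : Multiset ℕ} (h : Move026 G G') : G'.sum < G.sum := by
  obtain ⟨h, Y, rfl, ⟨h2, rfl⟩ | ⟨h2, rfl⟩ | ⟨i, j, hi, hj, hij, rfl⟩⟩ := (move_iff _ _).1 h <;>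
    simp only [Multiset.sum_cons] <;> omega

lemma move_pos {G G' : Multiset ℕ} (h : Move026 G G') (hp : ∀ j ∈ G, 1 ≤ j) :
    ∀ j ∈ G', 1 ≤ j := by
  obtain ⟨h, Y, rfl, ⟨h2, rfl⟩ | ⟨h2, rfl⟩ | ⟨i, j, hi, hj, hij, rfl⟩⟩ := (move_iff _ _).1 h <;>
    simp only [Multiset.mem_cons, forall_eq_or_imp] at hp ⊢
  · exact ⟨by omega, hp.2⟩
  · exact ⟨by omega, hp.2⟩
  · exact ⟨hi, hj, hp.2⟩

/-! ### The Grundy function -/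

lemma mex_eq {s : Set ℕ} {v : ℕ} (h1 : v ∉ s) (h2 : ∀ m < v, m ∈ s) : mex s = v := by
  unfold mex
  refine le_antisymm (Nat.sInf_le h1) ?_
  by_contra! hlt
  exact Nat.sInf_mem (s := {n | n ∉ s}) ⟨v, h1⟩ (h2 _ hlt)

lemma nimVal_move_ne {G G' : Multiset ℕ} (h : Move026 G G') : nimVal G' ≠ nimVal G := by
  obtain ⟨h, Y, rfl, ⟨h2, rfl⟩ | ⟨h2, rfl⟩ | ⟨i, j, hi, hj, hij, rfl⟩⟩ := (move_iff _ _).1 h <;>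
    simp only [nimVal, lowSum_cons, highSum_cons] <;> omega

/-- Removing two beans flips the high bit. -/
lemma nim_two {h v : ℕ} {Y : Multiset ℕ} (h3 : 3 ≤ h) (hv : nimVal (h ::ₘ Y) = v) :
    nimVal ((h - 2) ::ₘ Y) = v ^^^ 2 := by
  simp only [nimVal, lowSum_cons, highSum_cons] at *
  have h4 : v < 4 := by omega
  interval_cases v <;> simp only [Nat.reduceXor] <;> omega

lemma nim_one_even {h v : ℕ} {Y : Multiset ℕ} (h2 : 2 ≤ h) (he : h % 2 = 0)
    (hv : nimVal (h ::ₘ Y) = v) : nimVal ((h - 1) ::ₘ Y) = v ^^^ 1 := by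
  simp only [nimVal, lowSum_cons, highSum_cons] at *
  have h4 : v < 4 := by omega
  interval_cases v <;> simp only [Nat.reduceXor] <;> omega

lemma nim_one_odd {h v : ℕ} {Y : Multiset ℕ} (h3 : 3 ≤ h) (ho : h % 2 = 1)
    (hv : nimVal (h ::ₘ Y) = v) : nimVal ((h - 1) ::ₘ Y) = v ^^^ 3 := by
  simp only [nimVal, lowSum_cons, highSum_cons] at *
  have h4 : v < 4 := by omega
  interval_cases v <;> simp only [Nat.reduceXor] <;> omega

/-- A split into two odd heaps flips both bits. -/
lemma nim_split_odd {h v i j : ℕ} {Y : Multiset ℕ} (hij : i + j + 2 = h)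
    (hi : i % 2 = 1) (hj : j % 2 = 1) (hv : nimVal (h ::ₘ Y) = v) :
    nimVal (i ::ₘ j ::ₘ Y) = v ^^^ 3 := by
  simp only [nimVal, lowSum_cons, highSum_cons] at *
  obtain ⟨a, rfl⟩ : ∃ a, i = 2 * a + 1 := ⟨i / 2, by omega⟩
  obtain ⟨b, rfl⟩ : ∃ b, j = 2 * b + 1 := ⟨j / 2, by omega⟩
  subst hij
  rw [show (2 * a + 1 + 3) / 2 = a + 2 by omega, show (2 * b + 1 + 3) / 2 = b + 2 by omega]
  rw [show (2 * a + 1 + (2 * b + 1) + 2 + 3) / 2 = a + b + 3 by omega] at hv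
  have hl : ((2 * a + 1 + 1) % 2 + ((2 * b + 1 + 1) % 2 + lowSum Y)) % 2 =
      1 - ((2 * a + 1 + (2 * b + 1) + 2 + 1) % 2 + lowSum Y) % 2 := by omega
  have hh : ((a + 2) % 2 + ((b + 2) % 2 + highSum Y)) % 2 =
      1 - ((a + b + 3) % 2 + highSum Y) % 2 := by omega
  rw [hl, hh]
  have h4 : v < 4 := by omega
  clear hi hj hl hh
  interval_cases v <;> simp only [Nat.reduceXor] <;> omega

/-- A split with an even part flips only the low bit. -/
lemma nim_split_even {h v i j : ℕ} {Y : Multiset ℕ} (hij : i + j + 2 = h)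
    (hi : i % 2 = 0 ∨ j % 2 = 0) (hv : nimVal (h ::ₘ Y) = v) :
    nimVal (i ::ₘ j ::ₘ Y) = v ^^^ 1 := by
  simp only [nimVal, lowSum_cons, highSum_cons] at *
  have hl : ((i + 1) % 2 + ((j + 1) % 2 + lowSum Y)) % 2 =
      1 - ((h + 1) % 2 + lowSum Y) % 2 := by omega
  have hh : ((i + 3) / 2 % 2 + ((j + 3) / 2 % 2 + highSum Y)) % 2 =
      ((h + 3) / 2 % 2 + highSum Y) % 2 := by omega
  rw [hl, hh]
  have h4 : v < 4 := by omega
  clear hij hi hl hh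
  interval_cases v <;> simp only [Nat.reduceXor] <;> omega

/-- A smaller value differs from `nimVal G` by one of the nim-summands 1, 2, 3,
and each of these can be realised on a heap carrying the leading bit. -/
lemma exists_move_nimVal {G : Multiset ℕ} (hp : ∀ j ∈ G, 1 ≤ j) {m : ℕ}
    (hm : m < nimVal G) : ∃ G', Move026 G G' ∧ nimVal G' = m := by
  have hcase : (lowSum G % 2 = 1 ∧ m + 1 = nimVal G) ∨
      (highSum G % 2 = 1 ∧ m + 2 = nimVal G) ∨
      (highSum G % 2 = 1 ∧ m + nimVal G = 3) := by
    unfold nimVal at *; omega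
  rcases hcase with ⟨hb, hv⟩ | ⟨hb, hv⟩ | ⟨hb, hv⟩
  · obtain ⟨y, hy, hy2⟩ := exists_low hb
    have := hp y hy
    obtain ⟨Y, rfl⟩ := Multiset.exists_cons_of_mem hy
    refine ⟨_, move_one Y (by omega), ?_⟩
    simp only [nimVal, lowSum_cons, highSum_cons] at *; omega
  · obtain ⟨y, hy, hy2⟩ := exists_high hb
    have := hp y hy
    obtain ⟨Y, rfl⟩ := Multiset.exists_cons_of_mem hy
    refine ⟨_, move_two Y (by omega), ?_⟩
    simp only [nimVal, lowSum_cons, highSum_cons] at *; omega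
  · obtain ⟨y, hy, hy2⟩ := exists_high hb
    have := hp y hy
    obtain ⟨Y, rfl⟩ := Multiset.exists_cons_of_mem hy
    rcases Nat.even_or_odd' y with ⟨c, rfl | rfl⟩
    · refine ⟨_, move_split Y 1 (2 * c - 3) (by omega) (by omega) (by omega), ?_⟩
      simp only [nimVal, lowSum_cons, highSum_cons] at *; omega
    · refine ⟨_, move_one Y (by omega), ?_⟩
      simp only [nimVal, lowSum_cons, highSum_cons] at *; omega

lemma grundy_eq_nimVal (g : Multiset ℕ → ℕ)
    (hg : ∀ G : Multiset ℕ, g G = mex {m | ∃ G', Move026 G G' ∧ g G' = m}) :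
    ∀ (n : ℕ) (G : Multiset ℕ), G.sum = n → (∀ j ∈ G, 1 ≤ j) → g G = nimVal G := by
  intro n
  induction n using Nat.strong_induction_on with
  | _ n ih =>
    rintro G rfl hp
    have ih' : ∀ G', Move026 G G' → g G' = nimVal G' := fun G' hm =>
      ih _ (move_sum hm) G' rfl (move_pos hm hp)
    rw [hg]
    apply mex_eq
    · rintro ⟨G', hm, he⟩
      exact nimVal_move_ne hm (by rw [← ih' _ hm, he])
    · intro m hm
      obtain ⟨G', hm', he⟩ := exists_move_nimVal hp hm
      exact ⟨G', hm', by rw [ih' _ hm', he]⟩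

/-! ### No move joins two members of `PSet026` -/

lemma t_sub_two (h : ℕ) (h3 : 3 ≤ h) :
    t026 h ≤ t026 (h - 2) + 1 ∧ t026 (h - 2) ≤ t026 h + 1 := by
  have := t_spec h; have := t_spec (h - 2); omega

lemma w_sub_two (h : ℕ) :
    w026 h ≤ w026 (h - 2) + 1 ∧ w026 (h - 2) ≤ w026 h + 1 := by
  have := w_spec h; have := w_spec (h - 2); omega

/-- Taking two beans shifts `w` and `t` of the heap by at most one each, so it cannot jump over the gap
between the tame and the wild positions. -/
lemma not_wild_sub_two {h : ℕ} {Y : Multiset ℕ} (h3 : 3 ≤ h) (ht : Tame (h ::ₘ Y)) :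
    ¬ Wild ((h - 2) ::ₘ Y) := by
  rw [tame_cons] at ht
  rw [wild_cons]
  have := t_sub_two h h3; have := w_sub_two h
  rintro (h' | ⟨y, hy, h'⟩)
  · omega
  · have := ht.2 y hy; omega

lemma not_tame_sub_two {h : ℕ} {Y : Multiset ℕ} (h3 : 3 ≤ h) (hw : Wild (h ::ₘ Y)) :
    ¬ Tame ((h - 2) ::ₘ Y) := by
  rw [wild_cons] at hw
  rw [tame_cons]
  rintro ⟨h1, h2⟩
  have := t_sub_two h h3; have := w_sub_two h
  rcases hw with h' | ⟨y, hy, h'⟩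
  · omega
  · have := h2 y hy; omega

/-- Only the removal of two beans without splitting flips the high bit alone. -/
lemma eq_sub_two_of_nimVal {G G' : Multiset ℕ} (hm : Move026 G G')
    (hv : nimVal G + nimVal G' = 2) (hv' : nimVal G ≠ 1) :
    ∃ h Y, 3 ≤ h ∧ G = h ::ₘ Y ∧ G' = (h - 2) ::ₘ Y := by
  obtain ⟨h, Y, rfl, ⟨h2, rfl⟩ | ⟨h2, rfl⟩ | ⟨i, j, hi, hj, hij, rfl⟩⟩ := (move_iff _ _).1 hm
  · exfalso
    simp only [nimVal, lowSum_cons, highSum_cons] at *; omega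
  · exact ⟨h, Y, h2, rfl, rfl⟩
  · exfalso
    simp only [nimVal, lowSum_cons, highSum_cons] at *; omega

lemma heap_le_six_of_tPos {G : Multiset ℕ} (h0 : tPos026 G = 0) : ∀ y ∈ G, y ≤ 6 := by
  intro y hy
  have := t_le_tPos hy; have := t_spec y; omega

lemma heap_le_move {G G' : Multiset ℕ} (hm : Move026 G G') {b : ℕ} (hb : ∀ y ∈ G, y ≤ b) :
    ∀ y ∈ G', y ≤ b := by
  obtain ⟨h, Y, rfl, ⟨h2, rfl⟩ | ⟨h2, rfl⟩ | ⟨i, j, hi, hj, hij, rfl⟩⟩ := (move_iff _ _).1 hm <;>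
    simp only [Multiset.mem_cons, forall_eq_or_imp] at hb ⊢
  · exact ⟨by omega, hb.2⟩
  · exact ⟨by omega, hb.2⟩
  · exact ⟨by omega, by omega, hb.2⟩

lemma not_wild_of_le {G : Multiset ℕ} {b : ℕ} (hb : ∀ y ∈ G, y ≤ b) (h8 : b ≤ 8) : ¬ Wild G := by
  rintro ⟨y, hy, h⟩
  have := t_le_tPos hy; have := w_spec y; have := hb y hy; omega

lemma eq_of_t_eq_zero {i : ℕ} (hi : 1 ≤ i) (h : t026 i = 0) :
    i = 1 ∨ i = 2 ∨ i = 5 ∨ i = 6 := by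
  have := t_spec i; omega

lemma split_parity {h i j : ℕ} {Y : Multiset ℕ} (hij : i + j + 2 = h)
    (hv : nimVal (i ::ₘ j ::ₘ Y) + nimVal (h ::ₘ Y) = 1) : i % 2 = 0 ∨ j % 2 = 0 := by
  simp only [nimVal, lowSum_cons, highSum_cons] at hv
  omega

/-- Positions of value 0 and `t ≠ 0` with an option of value 1 and `t = 0` have a dominant heap,
so type (ii) of `PSet026` never leads to type (i). -/
lemma not_tame_of_move_zero {G G' : Multiset ℕ} (hm : Move026 G G') (hv : nimVal G = 0)
    (hv' : nimVal G' = 1) (hT : tPos026 G ≠ 0) (hT' : tPos026 G' = 0) : ¬ Tame G := by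
  intro ht
  obtain ⟨h, Y, rfl, ⟨h2, rfl⟩ | ⟨h2, rfl⟩ | ⟨i, j, hi, hj, hij, rfl⟩⟩ := (move_iff _ _).1 hm
  all_goals
    replace ht := ((tame_cons _ _).1 ht).1
    simp only [tPos_cons] at hT hT'
  · simp only [nimVal, lowSum_cons, highSum_cons] at hv hv'
    have := t_spec h; have := t_spec (h - 1); omega
  · simp only [nimVal, lowSum_cons, highSum_cons] at hv hv'
    omega
  · have hpar := split_parity (Y := Y) hij (by omega)
    have hi' := eq_of_t_eq_zero hi (by omega)
    have hj' := eq_of_t_eq_zero hj (by omega)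
    have := t_spec h; have := w_spec h
    -- `i, j ∈ {1, 2, 5, 6}` are not both odd, so `h` is 5 or 6, where `t h = 0`, or one of
    -- 9, 10, 13, 14, where `w h > 0 = t Y`
    rcases hi' with rfl | rfl | rfl | rfl <;> rcases hj' with rfl | rfl | rfl | rfl <;> omega

/-- Type (iii) of `PSet026` never leads to type (i). -/
lemma not_wild_of_move_zero {G G' : Multiset ℕ} (hm : Move026 G G') (hv : nimVal G = 2)
    (hv' : nimVal G' = 1) (hT' : tPos026 G' = 0) : ¬ Wild G := by
  intro hw
  rcases (move_iff _ _).1 hm with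
    ⟨h, Y, rfl, ⟨h2, rfl⟩ | ⟨h2, rfl⟩ | ⟨i, j, hi, hj, hij, rfl⟩⟩
  all_goals
    rw [wild_cons] at hw
    simp only [tPos_cons] at hT'
    have hw1 : 2 ≤ w026 h := by
      rcases hw with hw | ⟨y, hy, hw⟩
      · omega
      · have := heap_le_six_of_tPos (by omega : tPos026 Y = 0) y hy
        have := t_spec y; have := w_spec y; omega
    clear hw
    have := w_spec h
  · have := t_spec (h - 1); omega
  · have := t_spec (h - 2); omega
  · have hi' := eq_of_t_eq_zero hi (by omega)
    have hj' := eq_of_t_eq_zero hj (by omega)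
    -- the only candidate is 13 → 5 + 6, which flips the low bit alone
    have h13 : h = 13 := by omega
    simp only [nimVal, lowSum_cons, highSum_cons] at hv hv'
    clear hm
    subst h13
    omega

/-- Type (i) of `PSet026` never leads to type (ii). -/
lemma tPos_eq_zero_of_move {G G' : Multiset ℕ} (hm : Move026 G G') (hv : nimVal G = 1)
    (hv' : nimVal G' = 0) (hT : tPos026 G = 0) : tPos026 G' = 0 := by
  rcases (move_iff _ _).1 hm with
    ⟨h, Y, rfl, ⟨h2, rfl⟩ | ⟨h2, rfl⟩ | ⟨i, j, hi, hj, hij, rfl⟩⟩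
  all_goals
    simp only [tPos_cons] at hT ⊢
    have := eq_of_t_eq_zero (i := h) (by omega) (by omega)
  · simp only [nimVal, lowSum_cons, highSum_cons] at hv hv'
    have := t_spec (h - 1); omega
  · simp only [nimVal, lowSum_cons, highSum_cons] at hv hv'
    omega
  · have hpar := split_parity (Y := Y) hij (by omega)
    have hi2 : i ≤ 2 := by omega
    have hj2 : j ≤ 2 := by omega
    have := t_spec i; have := t_spec j; omega

lemma not_PSet026_of_move {G G' : Multiset ℕ} (hG : PSet026 G) (hm : Move026 G G') :
    ¬ PSet026 G' := by
  have hne := nimVal_move_ne hm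
  rintro (⟨hT', hv'⟩ | ⟨hT', ht', hv'⟩ | ⟨hT', hw', hv'⟩) <;>
    rcases hG with ⟨hT, hv⟩ | ⟨hT, ht, hv⟩ | ⟨hT, hw, hv⟩
  · omega
  · exact not_tame_of_move_zero hm hv hv' hT hT' ht
  · exact not_wild_of_move_zero hm hv hv' hT' hw
  · exact hT' (tPos_eq_zero_of_move hm hv hv' hT)
  · omega
  · obtain ⟨h, Y, h3, rfl, rfl⟩ := eq_sub_two_of_nimVal hm (by omega) (by omega)
    exact not_tame_sub_two h3 hw ht'
  · exact not_wild_of_le (heap_le_move hm (heap_le_six_of_tPos hT)) (by norm_num) hw'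
  · obtain ⟨h, Y, h3, rfl, rfl⟩ := eq_sub_two_of_nimVal hm (by omega) (by omega)
    exact not_wild_sub_two h3 ht hw'
  · omega

lemma exists_move_of_PSet026 {G : Multiset ℕ} (hp : ∀ j ∈ G, 1 ≤ j) (hG : PSet026 G) :
    ∃ G', Move026 G G' := by
  have hT : (tPos026 G = 0 ∧ nimVal G = 1) ∨ tPos026 G ≠ 0 := by
    rcases hG with h | h | h
    exacts [Or.inl h, Or.inr h.1, Or.inr h.1]
  rcases hT with ⟨_, hv⟩ | hT
  · obtain ⟨G', h, _⟩ := exists_move_nimVal hp (m := 0) (by omega)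
    exact ⟨G', h⟩
  · obtain ⟨y, hy, hy'⟩ := exists_t_ne hT
    obtain ⟨Y, rfl⟩ := Multiset.exists_cons_of_mem hy
    exact ⟨_, move_one Y (by have := t_spec y; omega)⟩

/-! ### Winning moves from outside `PSet026` -/

lemma tame_cons_cons (i j : ℕ) (X : Multiset ℕ) : Tame (i ::ₘ j ::ₘ X) ↔
    w026 i ≤ t026 j + tPos026 X ∧ w026 j ≤ t026 i + tPos026 X ∧
    ∀ y ∈ X, w026 y + t026 y ≤ t026 i + t026 j + tPos026 X := by
  rw [tame_cons]
  simp only [Multiset.mem_cons, forall_eq_or_imp, tPos_cons, add_assoc]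
  refine and_congr Iff.rfl (and_congr ?_ Iff.rfl)
  omega

/-- Removing two beans is a winning move to a tame position. -/
lemma tame_two {h : ℕ} {Y : Multiset ℕ} (h3 : 3 ≤ h) (hT : t026 (h - 2) + tPos026 Y ≠ 0)
    (h1 : w026 (h - 2) ≤ tPos026 Y)
    (hY : ∀ y ∈ Y, w026 y + t026 y ≤ t026 (h - 2) + tPos026 Y)
    (hv : nimVal ((h - 2) ::ₘ Y) = 0) : ∃ G', Move026 (h ::ₘ Y) G' ∧ PSet026 G' :=
  ⟨_, move_two Y h3, Or.inr (Or.inl ⟨by rwa [tPos_cons], (tame_cons _ _).2 ⟨h1, hY⟩, hv⟩)⟩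

/-- Removing one bean is a winning move to a tame position. -/
lemma tame_one {h : ℕ} {Y : Multiset ℕ} (h2 : 2 ≤ h) (hT : t026 (h - 1) + tPos026 Y ≠ 0)
    (h1 : w026 (h - 1) ≤ tPos026 Y)
    (hY : ∀ y ∈ Y, w026 y + t026 y ≤ t026 (h - 1) + tPos026 Y)
    (hv : nimVal ((h - 1) ::ₘ Y) = 0) : ∃ G', Move026 (h ::ₘ Y) G' ∧ PSet026 G' :=
  ⟨_, move_one Y h2, Or.inr (Or.inl ⟨by rwa [tPos_cons], (tame_cons _ _).2 ⟨h1, hY⟩, hv⟩)⟩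

/-- Splitting into `i` and `j` is a winning move to a tame position. -/
lemma tame_split {h : ℕ} {Y : Multiset ℕ} (i j : ℕ) (hi : 1 ≤ i) (hj : 1 ≤ j)
    (hij : i + j + 2 = h) (hT : t026 i + t026 j + tPos026 Y ≠ 0)
    (h1 : w026 i ≤ t026 j + tPos026 Y) (h2 : w026 j ≤ t026 i + tPos026 Y)
    (hY : ∀ y ∈ Y, w026 y + t026 y ≤ t026 i + t026 j + tPos026 Y)
    (hv : nimVal (i ::ₘ j ::ₘ Y) = 0) : ∃ G', Move026 (h ::ₘ Y) G' ∧ PSet026 G' :=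
  ⟨_, move_split Y i j hi hj hij,
    Or.inr (Or.inl ⟨by rwa [tPos_cons, tPos_cons, ← add_assoc],
      (tame_cons_cons _ _ _).2 ⟨h1, h2, hY⟩, hv⟩)⟩

/-- `t` is monotone on the heaps with `w ≠ 0`, and there `w < t`. Hence a heap `y ≤ k` cannot
dominate once the other heaps carry at least `t k - 1`. -/
lemma heap_bound {y k : ℕ} (h : y ≤ k) :
    w026 y = 0 ∨ (w026 y + 1 ≤ t026 y ∧ t026 y ≤ t026 k) := by
  have := t_spec y; have := w_spec y; have := t_spec k; omega

lemma win_zero {k : ℕ} {X : Multiset ℕ} (hk : 2 ≤ k)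
    (hT : tPos026 (k ::ₘ X) = 0) (hv : nimVal (k ::ₘ X) = 0) :
    ∃ G', Move026 (k ::ₘ X) G' ∧ PSet026 G' := by
  rw [tPos_cons] at hT
  have hT0 : tPos026 X = 0 := by omega
  simp only [nimVal, lowSum_cons, highSum_cons] at hv
  have hk' := eq_of_t_eq_zero (i := k) (by omega) (by omega)
  rcases hk' with rfl | rfl | rfl | rfl
  · omega
  · refine ⟨_, move_one X (by omega), Or.inl ⟨?_, ?_⟩⟩
    · simp [tPos_cons, t026, hT0]
    · simp only [nimVal, lowSum_cons, highSum_cons]; omega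
  · refine ⟨_, move_split X 1 2 (by omega) (by omega) (by omega), Or.inl ⟨?_, ?_⟩⟩
    · simp [tPos_cons, t026, hT0]
    · simp only [nimVal, lowSum_cons, highSum_cons]; omega
  · refine ⟨_, move_one X (by omega), Or.inl ⟨?_, ?_⟩⟩
    · simp [tPos_cons, t026, hT0]
    · simp only [nimVal, lowSum_cons, highSum_cons]; omega

lemma win_tame_one {G : Multiset ℕ} (hp : ∀ j ∈ G, 1 ≤ j) (hT : tPos026 G ≠ 0)
    (ht : Tame G) (hv : nimVal G = 1) : ∃ G', Move026 G G' ∧ PSet026 G' := by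
  obtain ⟨h, hh, he⟩ := exists_low (X := G) (by unfold nimVal at hv; omega)
  have hh1 := hp h hh
  obtain ⟨Y, rfl⟩ := Multiset.exists_cons_of_mem hh
  rw [tame_cons] at ht
  simp only [tPos_cons] at hT
  have th : t026 (h - 1) = t026 h := by
    have := t_spec h; have := t_spec (h - 1); omega
  by_cases hw : w026 (h - 1) ≤ tPos026 Y
  · refine tame_one (by omega) (by omega) hw (fun y hy => ?_) ?_
    · have := ht.2 y hy; omega
    · simpa using nim_one_even (by omega) (by omega) hv
  · -- `h - 1` would be dominant; the split into 2 and `h - 4` has the same nim value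
    have h12 : 12 ≤ h := by
      have := w_spec h; have := w_spec (h - 1); omega
    have s2 := w_odd (k := h - 1) (by omega) (by omega)
    have s4 := t_even (k := h - 4) (by omega) (by omega)
    have s5 : w026 (h - 4) ≤ tPos026 Y := by
      have := w_spec (h - 4); have := w_even (k := h) (by omega) he; omega
    have e2 : t026 2 = 0 := rfl
    have f2 : w026 2 = 0 := rfl
    refine tame_split 2 (h - 4) (by omega) (by omega) (by omega) (by omega) (by omega)
      (by omega) (fun y hy => ?_) ?_
    · have := t_le_tPos hy
      have := heap_bound (le_refl y); omega
    · simpa using nim_split_even (by omega) (by omega) hv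

lemma small_tame {Y : Multiset ℕ} (h8 : ∀ y ∈ Y, y ≤ 8) (c : ℕ) :
    ∀ y ∈ Y, w026 y + t026 y ≤ c + tPos026 Y := by
  intro y hy
  have := h8 y hy; have := t_le_tPos hy; have := w_spec y; omega

/-- All heaps are at most 8 and the nim value has its high bit set: the value is moved
to 0 with `t ≠ 0` if there is a heap 5 or 6 or if several heaps have `t ≠ 0`, and to 1 with
`t = 0` otherwise. -/
lemma win_small {G : Multiset ℕ} (hp : ∀ j ∈ G, 1 ≤ j) (h8 : ∀ j ∈ G, j ≤ 8)
    (hT : tPos026 G ≠ 0) (hv : 2 ≤ nimVal G) : ∃ G', Move026 G G' ∧ PSet026 G' := by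
  by_cases h56 : 5 ∈ G ∨ 6 ∈ G
  · rcases h56 with h | h <;> obtain ⟨Y, rfl⟩ := Multiset.exists_cons_of_mem h
    all_goals
      simp only [Multiset.mem_cons, forall_eq_or_imp] at h8
      simp only [nimVal, lowSum_cons, highSum_cons] at hv
      have e1 : t026 1 = 0 := rfl
      have e3 : t026 3 = 1 := rfl
      have e4 : t026 4 = 1 := rfl
      have f1 : w026 1 = 0 := rfl
      have f3 : w026 3 = 0 := rfl
      have f4 : w026 4 = 0 := rfl
    · by_cases hl : lowSum Y % 2 = 0
      · refine tame_two (by omega) (by simp only [Nat.reduceSub]; omega)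
          (by simp only [Nat.reduceSub]; omega) (small_tame h8.2 _) ?_
        simp only [nimVal, lowSum_cons, highSum_cons]; omega
      · refine tame_one (by omega) (by simp only [Nat.reduceSub]; omega)
          (by simp only [Nat.reduceSub]; omega) (small_tame h8.2 _) ?_
        simp only [nimVal, lowSum_cons, highSum_cons]; omega
    · by_cases hl : lowSum Y % 2 = 0
      · refine tame_split 1 3 (by omega) (by omega) (by omega) (by omega) (by omega)
          (by omega) (small_tame h8.2 _) ?_
        simp only [nimVal, lowSum_cons, highSum_cons]; omega
      · refine tame_two (by omega) (by simp only [Nat.reduceSub]; omega)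
          (by simp only [Nat.reduceSub]; omega) (small_tame h8.2 _) ?_
        simp only [nimVal, lowSum_cons, highSum_cons]; omega
  · push Not at h56
    obtain ⟨h, hh, ht⟩ := exists_t_ne hT
    have hh8 := h8 h hh
    obtain ⟨Y, rfl⟩ := Multiset.exists_cons_of_mem hh
    simp only [Multiset.mem_cons, not_or] at h56
    simp only [Multiset.mem_cons, forall_eq_or_imp] at h8 hp
    have hh' : h = 3 ∨ h = 4 ∨ h = 7 ∨ h = 8 := by
      have := t_spec h; omega
    by_cases hTY : tPos026 Y = 0
    · -- the only heap with `t ≠ 0` is `h`, so `t` can be brought to 0 and the value to 1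
      have hl : highSum Y % 2 = 0 := by
        by_contra hc
        obtain ⟨y, hy, hy2⟩ := exists_high (X := Y) (by omega)
        have := t_le_tPos hy
        have := hp.2 y hy
        have h5 : y ≠ 5 := fun h => h56.1.2 (h ▸ hy)
        have h6 : y ≠ 6 := fun h => h56.2.2 (h ▸ hy)
        have := eq_of_t_eq_zero this (by omega)
        omega
      suffices hs : ∃ G', Move026 (h ::ₘ Y) G' ∧ tPos026 G' = 0 ∧ nimVal G' = 1 by
        obtain ⟨G', h1, h2⟩ := hs
        exact ⟨G', h1, Or.inl h2⟩
      simp only [nimVal, lowSum_cons, highSum_cons] at hv ⊢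
      by_cases hb : lowSum Y % 2 = 0
      · rcases hh' with rfl | rfl | rfl | rfl
        · exact ⟨_, move_one Y (by omega), by simp [tPos_cons, t026, hTY],
            by simp only [lowSum_cons, highSum_cons]; omega⟩
        · exact ⟨_, move_two Y (by omega), by simp [tPos_cons, t026, hTY],
            by simp only [lowSum_cons, highSum_cons]; omega⟩
        · exact ⟨_, move_one Y (by omega), by simp [tPos_cons, t026, hTY],
            by simp only [lowSum_cons, highSum_cons]; omega⟩
        · exact ⟨_, move_two Y (by omega), by simp [tPos_cons, t026, hTY],
            by simp only [lowSum_cons, highSum_cons]; omega⟩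
      · rcases hh' with rfl | rfl | rfl | rfl
        · exact ⟨_, move_two Y (by omega), by simp [tPos_cons, t026, hTY],
            by simp only [lowSum_cons, highSum_cons]; omega⟩
        · exact ⟨_, move_split Y 1 1 (by omega) (by omega) (by omega),
            by simp [tPos_cons, t026, hTY], by simp only [lowSum_cons, highSum_cons]; omega⟩
        · exact ⟨_, move_two Y (by omega), by simp [tPos_cons, t026, hTY],
            by simp only [lowSum_cons, highSum_cons]; omega⟩
        · exact ⟨_, move_split Y 1 5 (by omega) (by omega) (by omega),
            by simp [tPos_cons, t026, hTY], by simp only [lowSum_cons, highSum_cons]; omega⟩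
    · obtain ⟨G', hm, hv'⟩ : ∃ G', Move026 (h ::ₘ Y) G' ∧ tPos026 Y ≤ tPos026 G' ∧
          nimVal G' = 0 := by
        simp only [nimVal, lowSum_cons, highSum_cons] at hv ⊢
        by_cases hb : ((h + 1) % 2 + lowSum Y) % 2 = 0
        · exact ⟨_, move_two Y (by omega), by rw [tPos_cons]; omega,
            by simp only [lowSum_cons, highSum_cons]; omega⟩
        · by_cases ho : h % 2 = 0
          · exact ⟨_, move_split Y 1 (h - 3) (by omega) (by omega) (by omega),
              by simp only [tPos_cons]; omega, by simp only [lowSum_cons, highSum_cons]; omega⟩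
          · exact ⟨_, move_one Y (by omega), by rw [tPos_cons]; omega,
              by simp only [lowSum_cons, highSum_cons]; omega⟩
      refine ⟨G', hm, Or.inr (Or.inl ⟨by omega, fun y hy => ?_, hv'.2⟩)⟩
      have := heap_le_move hm (b := 8) (by simpa using ⟨hh8, h8.2⟩) y hy
      have := t_le_tPos hy; have := w_spec y; omega

lemma win_tame_two {k : ℕ} {X : Multiset ℕ} (hp : ∀ j ∈ k ::ₘ X, 1 ≤ j)
    (hX : ∀ y ∈ X, y ≤ k) (hT : tPos026 (k ::ₘ X) ≠ 0) (hw : w026 k ≤ tPos026 X + 1)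
    (hv : nimVal (k ::ₘ X) = 2) : ∃ G', Move026 (k ::ₘ X) G' ∧ PSet026 G' := by
  by_cases h8 : k ≤ 8
  · exact win_small hp (by
      simp only [Multiset.mem_cons, forall_eq_or_imp]
      exact ⟨h8, fun y hy => (hX y hy).trans h8⟩) hT hv.ge
  have s3 : t026 (k - 2) + 1 = t026 k ∧ 1 ≤ t026 (k - 2) := by
    have := t_spec k; have := t_spec (k - 2); omega
  by_cases h12 : k = 12 ∧ tPos026 X = 0
  · -- 10 would still be dominant
    obtain ⟨rfl, h0⟩ := h12
    refine ⟨_, move_split X 5 5 (by omega) (by omega) (by omega), Or.inl ⟨?_, ?_⟩⟩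
    · simp [tPos_cons, t026, h0]
    · simpa using nim_split_odd (by omega) (by omega) (by omega) hv
  · have s4 : w026 (k - 2) ≤ tPos026 X := by
      have := w_spec k; have := w_spec (k - 2); omega
    refine tame_two (by omega) (by omega) s4 (fun y hy => ?_) ?_
    · have := heap_bound (hX y hy); have := t_le_tPos hy; omega
    · simpa using nim_two (by omega) hv

lemma win_tame_three {k : ℕ} {X : Multiset ℕ} (hp : ∀ j ∈ k ::ₘ X, 1 ≤ j)
    (hX : ∀ y ∈ X, y ≤ k) (hT : tPos026 (k ::ₘ X) ≠ 0) (hw : w026 k ≤ tPos026 X + 1)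
    (hv : nimVal (k ::ₘ X) = 3) : ∃ G', Move026 (k ::ₘ X) G' ∧ PSet026 G' := by
  by_cases h8 : k ≤ 8
  · exact win_small hp (by
      simp only [Multiset.mem_cons, forall_eq_or_imp]
      exact ⟨h8, fun y hy => (hX y hy).trans h8⟩) hT (by omega)
  by_cases ho : k % 2 = 1
  · have s3 : t026 (k - 1) + 1 = t026 k ∧ 1 ≤ t026 (k - 1) := by
      have := t_spec k; have := t_spec (k - 1); omega
    have s4 : w026 (k - 1) ≤ tPos026 X := by
      have := w_spec k; have := w_spec (k - 1); omega
    refine tame_one (by omega) (by omega) (by omega) (fun y hy => ?_) ?_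
    · have := heap_bound (hX y hy); have := t_le_tPos hy; omega
    · simpa using nim_one_odd (by omega) (by omega) hv
  · have e3 : t026 3 = 1 := rfl
    have f3 : w026 3 = 0 := rfl
    by_cases h10 : k = 10
    · subst h10
      have e10 : t026 10 = 2 := rfl
      have e7 : t026 7 = 1 := rfl
      have f7 : w026 7 = 0 := rfl
      have e1 : t026 1 = 0 := rfl
      have f1 : w026 1 = 0 := rfl
      refine tame_split 1 7 (by omega) (by omega) (by omega) (by omega) (by omega)
        (by omega) (fun y hy => ?_) ?_
      · have := heap_bound (hX y hy); have := t_le_tPos hy; omega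
      · simpa using nim_split_odd (by omega) (by omega) (by omega) hv
    · have s2 := t_even (k := k) (by omega) (by omega)
      have s3 := t_odd (k := k - 5) (by omega) (by omega)
      have s4 : w026 (k - 5) ≤ 1 + tPos026 X := by
        have := w_spec k; have := w_spec (k - 5); omega
      refine tame_split 3 (k - 5) (by omega) (by omega) (by omega) (by omega) (by omega)
        (by omega) (fun y hy => ?_) ?_
      · have := heap_bound (hX y hy); have := t_le_tPos hy; omega
      · simpa using nim_split_odd (by omega) (by omega) (by omega) hv

/-- Lowering `t` of a side heap by removing two beans makes the large heap `k` wild. -/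
lemma win_lower_side {k : ℕ} {X : Multiset ℕ} (h0 : tPos026 X ≠ 0)
    (hw : tPos026 X + 1 ≤ w026 k) (hv : nimVal (k ::ₘ X) = 0) :
    ∃ G', Move026 (k ::ₘ X) G' ∧ PSet026 G' := by
  obtain ⟨y, hy, hty⟩ := exists_t_ne h0
  obtain ⟨Y, rfl⟩ := Multiset.exists_cons_of_mem hy
  have hy3 : 3 ≤ y := by have := t_spec y; omega
  have s1 : t026 (y - 2) + 1 = t026 y := by
    have := t_spec y; have := t_spec (y - 2); omega
  have s2 : 1 ≤ t026 k := by have := t_spec k; have := w_spec k; omega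
  rw [tPos_cons] at hw
  rw [Multiset.cons_swap] at hv ⊢
  refine ⟨_, move_two _ hy3, Or.inr (Or.inr ⟨?_, ⟨k, by simp, ?_⟩, ?_⟩)⟩
  · simp only [tPos_cons]; omega
  · simp only [tPos_cons]; omega
  · simpa using nim_two hy3 hv

/-- If `t X = 0`, the heaps of `X` are among 1, 2, 5, 6, of nim values 0 and 1. -/
lemma highSum_even {X : Multiset ℕ} (hp : ∀ j ∈ X, 1 ≤ j) (h0 : tPos026 X = 0) :
    highSum X % 2 = 0 := by
  by_contra hc
  obtain ⟨y, hy, hy2⟩ := exists_high (X := X) (by omega)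
  have := t_le_tPos hy
  have := eq_of_t_eq_zero (hp y hy) (by omega)
  omega

lemma win_wild_zero {k : ℕ} {X : Multiset ℕ} (hp : ∀ j ∈ X, 1 ≤ j)
    (hw : tPos026 X + 2 ≤ w026 k) (hv : nimVal (k ::ₘ X) = 0) :
    ∃ G', Move026 (k ::ₘ X) G' ∧ PSet026 G' := by
  by_cases h0 : tPos026 X = 0
  · have := highSum_even hp h0
    have hv' := hv
    simp only [nimVal, lowSum_cons, highSum_cons] at hv'
    have h3 : 3 ≤ k := by have := w_spec k; omega
    have s1 : 2 ≤ w026 (k - 2) := by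
      have := w_spec k; have := w_spec (k - 2); omega
    have s3 : 1 ≤ t026 (k - 2) := by
      have := w_spec k; have := t_spec (k - 2); omega
    refine ⟨_, move_two X (by omega), Or.inr (Or.inr ⟨?_, ?_, ?_⟩)⟩
    · rw [tPos_cons]; omega
    · rw [wild_cons]; left; omega
    · simpa using nim_two (by omega) hv
  · exact win_lower_side h0 (by omega) hv

lemma win_wild_one {k : ℕ} {X : Multiset ℕ} (hX : ∀ y ∈ X, y ≤ k)
    (hw : tPos026 X + 2 ≤ w026 k) (hv : nimVal (k ::ₘ X) = 1) :
    ∃ G', Move026 (k ::ₘ X) G' ∧ PSet026 G' := by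
  have h11 : 11 ≤ k := by have := w_spec k; omega
  by_cases ho : k % 2 = 0
  · have s2 := w_even h11 ho
    have s3 := w_odd (k := k - 3) (by omega) (by omega)
    have s4 := t_odd (k := k - 3) (by omega) (by omega)
    refine ⟨_, move_split X (k - 3) 1 (by omega) (by omega) (by omega),
      Or.inr (Or.inr ⟨?_, ?_, ?_⟩)⟩
    · rw [tPos_cons]; omega
    · rw [wild_cons]; left; rw [tPos_cons, show t026 1 = 0 from rfl]; omega
    · simpa using nim_split_odd (by omega) (by omega) (by omega) hv
  · by_cases h13 : k = 13
    · -- the even split 5 + 6 would have `t = 0`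
      subst h13
      have e13 : w026 13 = 3 := rfl
      have e4 : t026 4 = 1 := rfl
      have e7 : t026 7 = 1 := rfl
      have f4 : w026 4 = 0 := rfl
      have f7 : w026 7 = 0 := rfl
      refine tame_split 4 7 (by omega) (by omega) (by omega) (by omega) (by omega)
        (by omega) (fun y hy => ?_) ?_
      · have := heap_bound (hX y hy); have := t_le_tPos hy; omega
      · simpa using nim_split_even (by omega) (by omega) hv
    · -- two almost equal heaps keep each other tame
      obtain ⟨i, rfl⟩ : ∃ i, k = 2 * i + 3 := ⟨(k - 3) / 2, by omega⟩
      have s2 := w_odd h11 (by omega)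
      have s3 : w026 i ≤ t026 (i + 1) := by
        have := w_spec i; have := t_spec (i + 1); omega
      have s4 : w026 (i + 1) ≤ t026 i := by
        have := w_spec (i + 1); have := t_spec i; omega
      have s5 : w026 (2 * i + 3) ≤ t026 i + t026 (i + 1) + 3 ∧ t026 i + t026 (i + 1) ≠ 0 := by
        have := t_spec i; have := t_spec (i + 1); omega
      refine tame_split i (i + 1) (by omega) (by omega) (by omega) (by omega) (by omega)
        (by omega) (fun y hy => ?_) ?_
      · have := heap_bound (hX y hy); have := t_le_tPos hy; omega
      · simpa using nim_split_even (by omega) (by omega) hv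

lemma win_wild_three {k : ℕ} {X : Multiset ℕ} (hp : ∀ j ∈ X, 1 ≤ j) (hX : ∀ y ∈ X, y ≤ k)
    (hw : tPos026 X + 2 ≤ w026 k) (hv : nimVal (k ::ₘ X) = 3) :
    ∃ G', Move026 (k ::ₘ X) G' ∧ PSet026 G' := by
  have s1 := w_spec k; have s2 := t_spec k
  by_cases h11 : k = 11
  · -- `t X = 0`, so `X` has an even heap; a bean taken from it leaves 11 dominant and value 2
    subst h11
    have h0 : tPos026 X = 0 := by omega
    have := highSum_even hp h0
    simp only [nimVal, lowSum_cons, highSum_cons] at hv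
    obtain ⟨y, hy, hy2⟩ := exists_low (X := X) (by omega)
    have h1 := t_le_tPos hy
    have h2 := eq_of_t_eq_zero (hp y hy) (by omega)
    obtain ⟨Y, rfl⟩ := Multiset.exists_cons_of_mem hy
    rw [tPos_cons] at h0
    simp only [lowSum_cons, highSum_cons] at hv
    have s3 := t_spec (y - 1)
    rw [Multiset.cons_swap]
    clear this
    refine ⟨_, move_one _ (by omega), Or.inr (Or.inr ⟨?_, ⟨11, by simp, ?_⟩, ?_⟩)⟩
    · simp only [tPos_cons]; omega
    · simp only [tPos_cons]; omega
    · simp only [nimVal, lowSum_cons, highSum_cons]; omega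
  have h13 : 13 ≤ k := by omega
  clear s1 s2
  by_cases ho : k % 2 = 0
  · have s1 := w_even (k := k) (by omega) ho
    have s3 := w_odd (k := k - 1) (by omega) (by omega)
    have s4 := t_odd (k := k - 1) (by omega) (by omega)
    refine ⟨_, move_one X (by omega), Or.inr (Or.inr ⟨?_, ?_, ?_⟩)⟩
    · rw [tPos_cons]; omega
    · rw [wild_cons]; left; omega
    · simpa using nim_one_even (by omega) (by omega) hv
  · have s1 := w_odd (k := k) (by omega) (by omega)
    by_cases h4 : tPos026 X + 4 ≤ w026 k
    · have hk15 : 15 ≤ k := by omega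
      have s5 := w_odd (k := k - 4) (by omega) (by omega)
      have s6 := t_odd (k := k - 4) (by omega) (by omega)
      refine ⟨_, move_split X (k - 4) 2 (by omega) (by omega) (by omega),
        Or.inr (Or.inr ⟨?_, ?_, ?_⟩)⟩
      · rw [tPos_cons]; omega
      · rw [wild_cons]; left; rw [tPos_cons, show t026 2 = 0 from rfl]; omega
      · simpa using nim_split_even (by omega) (by omega) hv
    · have s2 := t_odd (k := k) (by omega) (by omega)
      have s3 : w026 (k - 1) ≤ tPos026 X := by
        have := w_spec (k - 1); omega
      have s4 := t_even (k := k - 1) (by omega) (by omega)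
      refine tame_one (by omega) (by omega) (by omega) (fun y hy => ?_) ?_
      · have := heap_bound (hX y hy); have := t_le_tPos hy; omega
      · simpa using nim_one_odd (by omega) (by omega) hv

lemma win_middle_zero {k : ℕ} {X : Multiset ℕ} (hp : ∀ j ∈ X, 1 ≤ j)
    (hw : w026 k = tPos026 X + 1) (hv : nimVal (k ::ₘ X) = 0) :
    ∃ G', Move026 (k ::ₘ X) G' ∧ PSet026 G' := by
  by_cases h0 : tPos026 X = 0
  · have := highSum_even hp h0
    simp only [nimVal, lowSum_cons, highSum_cons] at hv
    have hk : k = 9 ∨ k = 10 ∨ k = 14 := by have := w_spec k; omega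
    suffices hs : ∃ G', Move026 (k ::ₘ X) G' ∧ tPos026 G' = 0 ∧ nimVal G' = 1 by
      obtain ⟨G', h1, h2⟩ := hs
      exact ⟨G', h1, Or.inl h2⟩
    rcases hk with rfl | rfl | rfl
    · exact ⟨_, move_split X 1 6 (by omega) (by omega) (by omega), by simp [tPos_cons, t026, h0],
        by simp only [nimVal, lowSum_cons, highSum_cons]; omega⟩
    · exact ⟨_, move_split X 2 6 (by omega) (by omega) (by omega), by simp [tPos_cons, t026, h0],
        by simp only [nimVal, lowSum_cons, highSum_cons]; omega⟩
    · exact ⟨_, move_split X 6 6 (by omega) (by omega) (by omega), by simp [tPos_cons, t026, h0],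
        by simp only [nimVal, lowSum_cons, highSum_cons]; omega⟩
  · exact win_lower_side h0 (by omega) hv

lemma win_middle_one {k : ℕ} {X : Multiset ℕ} (hX : ∀ y ∈ X, y ≤ k)
    (hw : w026 k = tPos026 X + 1) (hv : nimVal (k ::ₘ X) = 1) :
    ∃ G', Move026 (k ::ₘ X) G' ∧ PSet026 G' := by
  have h9 : 9 ≤ k := by have := w_spec k; omega
  -- a split `i + j` with no dominating heap, of nim value `g(k) xor 1`
  obtain ⟨i, j, hi, hj, hij, hpar, h1, h2, h3, h4⟩ : ∃ i j, 1 ≤ i ∧ 1 ≤ j ∧ i + j + 2 = k ∧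
      (i % 2 = 0 ∨ j % 2 = 0) ∧
      w026 i ≤ t026 j + tPos026 X ∧ w026 j ≤ t026 i + tPos026 X ∧
      t026 i + t026 j ≠ 0 ∧ tPos026 X ≤ t026 i + t026 j + 1 := by
    by_cases h9' : k = 9
    · subst h9'
      have e9 : w026 9 = 1 := rfl
      refine ⟨3, 4, ?_⟩
      have e3 : t026 3 = 1 := rfl
      have e4 : t026 4 = 1 := rfl
      have f3 : w026 3 = 0 := rfl
      have f4 : w026 4 = 0 := rfl
      omega
    by_cases h10 : k = 10
    · subst h10
      have e10 : w026 10 = 1 := rfl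
      refine ⟨4, 4, ?_⟩
      have e4 : t026 4 = 1 := rfl
      have f4 : w026 4 = 0 := rfl
      omega
    by_cases h14 : k = 14
    · subst h14
      have e14 : w026 14 = 1 := rfl
      refine ⟨4, 8, ?_⟩
      have e4 : t026 4 = 1 := rfl
      have f4 : w026 4 = 0 := rfl
      have e8 : t026 8 = 1 := rfl
      have f8 : w026 8 = 0 := rfl
      omega
    by_cases ho : k % 2 = 0
    · have s1 := w_even (k := k) (by omega) ho
      have s3 : w026 (k - 4) ≤ tPos026 X := by
        have := w_spec (k - 4); omega
      have s4 := t_even (k := k - 4) (by omega) (by omega)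
      have e2 : t026 2 = 0 := rfl
      have f2 : w026 2 = 0 := rfl
      exact ⟨2, k - 4, by omega⟩
    · have s1 := w_odd (k := k) (by omega) (by omega)
      have s3 : w026 (k - 3) ≤ tPos026 X := by
        have := w_spec (k - 3); omega
      have s4 := t_even (k := k - 3) (by omega) (by omega)
      have e1 : t026 1 = 0 := rfl
      have f1 : w026 1 = 0 := rfl
      exact ⟨1, k - 3, by omega⟩
  refine tame_split i j hi hj hij (by omega) h1 h2 (fun y hy => ?_) ?_
  · have := heap_bound (hX y hy); have := t_le_tPos hy; omega
  · simpa using nim_split_even hij hpar hv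

/-- No heap `y` of `X` is dominant in `k ::ₘ X` if `k` is at least as large as all of them, so
tameness and wildness are decided by a largest heap. -/
lemma side_le {k : ℕ} {X : Multiset ℕ} (hX : ∀ y ∈ X, y ≤ k) :
    ∀ y ∈ X, w026 y + t026 y ≤ t026 k + tPos026 X := by
  intro y hy
  have := heap_bound (hX y hy); have := t_le_tPos hy; omega

lemma tame_max {k : ℕ} {X : Multiset ℕ} (hX : ∀ y ∈ X, y ≤ k) :
    Tame (k ::ₘ X) ↔ w026 k ≤ tPos026 X := by
  rw [tame_cons]
  exact and_iff_left (side_le hX)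

lemma wild_max {k : ℕ} {X : Multiset ℕ} (hX : ∀ y ∈ X, y ≤ k) :
    Wild (k ::ₘ X) ↔ tPos026 X + 2 ≤ w026 k := by
  rw [wild_cons]
  refine or_iff_left ?_
  rintro ⟨y, hy, h⟩
  have := side_le hX y hy; omega

/-- Every position outside `PSet026` that is not a pile of heaps of size 1 has an option in it.
The cases are the nim value and how `w k` compares with `t X`. -/
lemma exists_PSet026_of_not {k : ℕ} {X : Multiset ℕ} (hp : ∀ j ∈ k ::ₘ X, 1 ≤ j)
    (hX : ∀ y ∈ X, y ≤ k) (hk : 2 ≤ k) (hn : ¬ PSet026 (k ::ₘ X)) :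
    ∃ G', Move026 (k ::ₘ X) G' ∧ PSet026 G' := by
  have hpX : ∀ j ∈ X, 1 ≤ j := fun j hj => hp j (Multiset.mem_cons_of_mem hj)
  have hv4 : nimVal (k ::ₘ X) = 0 ∨ nimVal (k ::ₘ X) = 1 ∨ nimVal (k ::ₘ X) = 2 ∨
      nimVal (k ::ₘ X) = 3 := by unfold nimVal; omega
  unfold PSet026 at hn
  rw [tame_max hX, wild_max hX] at hn
  by_cases hT : tPos026 (k ::ₘ X) = 0
  · have := highSum_even hp hT
    exact win_zero hk hT (by unfold nimVal at *; omega)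
  · by_cases h1 : w026 k ≤ tPos026 X
    · rcases hv4 with hv | hv | hv | hv
      · omega
      · exact win_tame_one hp hT ((tame_max hX).2 h1) hv
      · exact win_tame_two hp hX hT (by omega) hv
      · exact win_tame_three hp hX hT (by omega) hv
    · by_cases h2 : tPos026 X + 2 ≤ w026 k
      · rcases hv4 with hv | hv | hv | hv
        · exact win_wild_zero hpX h2 hv
        · exact win_wild_one hX h2 hv
        · omega
        · exact win_wild_three hpX hX h2 hv
      · rcases hv4 with hv | hv | hv | hv
        · exact win_middle_zero hpX (by omega) hv
        · exact win_middle_one hX (by omega) hv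
        · exact win_tame_two hp hX hT (by omega) hv
        · exact win_tame_three hp hX hT (by omega) hv

/-! ### The characterization -/

lemma PP_iff_PSet026 (PP : Multiset ℕ → Prop)
    (hPP : ∀ G : Multiset ℕ,
      PP G ↔ ((∃ G', Move026 G G') ∧ ∀ G', Move026 G G' → ¬ PP G')) :
    ∀ (n : ℕ) (G : Multiset ℕ), G.sum = n → (∀ j ∈ G, 1 ≤ j) → (PP G ↔ PSet026 G) := by
  intro n
  induction n using Nat.strong_induction_on with
  | _ n ih =>
    rintro G rfl hp
    have ih' : ∀ G', Move026 G G' → (PP G' ↔ PSet026 G') := fun G' hm =>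
      ih _ (move_sum hm) G' rfl (move_pos hm hp)
    rw [hPP]
    constructor
    · rintro ⟨⟨G₁, hm₁⟩, hall⟩
      by_contra hn
      obtain ⟨h, Y, hG, hh⟩ := (move_iff _ _).1 hm₁
      have hh2 : 2 ≤ h := by
        rcases hh with hh | hh | ⟨i, j, hi, hj, hij, _⟩ <;> omega
      obtain ⟨k, hk, hmax⟩ := G.toFinset.exists_max_image id ⟨h, by simp [hG]⟩
      simp only [Multiset.mem_toFinset, id] at hk hmax
      have hhk := hmax h (by simp [hG])
      obtain ⟨X, rfl⟩ := Multiset.exists_cons_of_mem hk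
      obtain ⟨G', hm, hP⟩ := exists_PSet026_of_not hp
        (fun y hy => hmax y (Multiset.mem_cons_of_mem hy)) (by omega) hn
      exact hall G' hm ((ih' G' hm).2 hP)
    · intro hP
      exact ⟨exists_move_of_PSet026 hp hP, fun G' hm h =>
        not_PSet026_of_move hP hm ((ih' G' hm).1 h)⟩

/-- Allemang's characterization of the misère P-positions of 0.26.  Here `PP` is
the misère P-position predicate (characterized recursively: a position is a
P-position iff it has at least one option and every option is an N-position),
and `g` is the normal-play Grundy function (characterized by the mex recursion).
`G` is a nonempty position with all heaps positive, `k` is a heap of maximal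
size in `G`, and `X = G.erase k`. -/
theorem ppos026_characterization
    (g : Multiset ℕ → ℕ)
    (hg : ∀ G : Multiset ℕ, g G = mex {m | ∃ G', Move026 G G' ∧ g G' = m})
    (PP : Multiset ℕ → Prop)
    (hPP : ∀ G : Multiset ℕ,
      PP G ↔ ((∃ G', Move026 G G') ∧ ∀ G', Move026 G G' → ¬ PP G'))
    (G : Multiset ℕ) (hpos : ∀ j ∈ G, 1 ≤ j)
    (k : ℕ) (hk : k ∈ G) (hmax : ∀ j ∈ G, j ≤ k) :
    PP G ↔
      (tPos026 G = 0 ∧ g G = 1) ∨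
      (tPos026 G ≠ 0 ∧ w026 k ≤ tPos026 (G.erase k) ∧ g G = 0) ∨
      (tPos026 G ≠ 0 ∧ tPos026 (G.erase k) + 2 ≤ w026 k ∧ g G = 2) := by
  rw [PP_iff_PSet026 PP hPP _ G rfl hpos, grundy_eq_nimVal g hg _ G rfl hpos]
  obtain ⟨X, rfl⟩ := Multiset.exists_cons_of_mem hk
  have hX : ∀ y ∈ X, y ≤ k := fun y hy => hmax y (Multiset.mem_cons_of_mem hy)
  rw [PSet026, tame_max hX, wild_max hX, Multiset.erase_cons_head]
end

section
/- The bipartite monoid (Q, P) associated to the game 0.26 is reduced: for all x ≠ y in Q there exists z ∈ Q such that exactly one of x·z ∈ P, y·z ∈ P holds. -/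
/-!
Each element of `Q` can be written as `a^e b^i` or `a^e b^m c_n` with `m ≤ n`. To see that these
normal forms are distinct, and to decide membership in `P`, the element is given three invariants:
its `a`-parity `e`; its weight `w`, where `b` weighs `1` and `c_n` weighs `n + 2`; and its level
`u`, the maximum of the weight and of `2 n + 3` over all factors `c_n`. They behave well under
products (`e` and `w` add up, and the level of a product is the maximum of its weight and of both
levels) and respect the relations. An element has the form `a^e b^i` exactly when `w = u`, and the
triple `(e, w, u)` determines it (`inv026_injective`). Membership in `P` reads (`mem_P026_iff`):
either `e = 1` and `u = 0`, or `e = 0`, `w = u` is even and positive, or `e = 0`, `w < u` and `w`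
is odd.

Distinct elements are then separated as follows. If `e` or the parity of `w` differ, a large
power of `b`, possibly times `a`, separates them. Otherwise take `e = 0` for both.
* A power of `b` and an element `b^m c_n` (`m ≤ n`) are separated by `1` or `a`.
* `b^i` and `b^j` with `i < j` are separated by `c_i`.
* If both have `w < u`, either the gaps `u - w` differ, and the power of `b` which closes only the
  smaller gap separates them; or the weights differ, and `c_j` for a suitable `j` does.
-/

/-- Generators of the misère quotient of 0.26: `a`, `b`, and `c n` for `n : ℕ`. -/
inductive Gen026 where
  | a : Gen026
  | b : Gen026
  | c : ℕ → Gen026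

/-- The free commutative monoid on the generators, written multiplicatively. -/
abbrev FM026 := Multiplicative (Multiset Gen026)

/-- The generator `x` as an element of the free commutative monoid. -/
def fgen026 (x : Gen026) : FM026 := Multiplicative.ofAdd {x}

def fa : FM026 := fgen026 .a
def fb : FM026 := fgen026 .b
def fc (n : ℕ) : FM026 := fgen026 (.c n)

/-- The defining relations of the quotient `Q`:
`a² = 1`, `b^(n+1) c_n = b^(2n+3)`, and `c_m c_n = b^(m+2) c_n` for `m ≤ n`. -/
def rel026 : FM026 → FM026 → Prop := fun x y =>
  (x = fa ^ 2 ∧ y = 1) ∨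
  (∃ n : ℕ, x = fb ^ (n + 1) * fc n ∧ y = fb ^ (2 * n + 3)) ∨
  (∃ m n : ℕ, m ≤ n ∧ x = fc m * fc n ∧ y = fb ^ (m + 2) * fc n)

/-- The commutative monoid `Q` presented by generators `a`, `b`, `c_n` and the
relations `rel026`. -/
def Q026 : Type := (conGen rel026).Quotient

instance : CommMonoid Q026 := Con.commMonoid _

/-- The image of `a` in `Q`. -/
def qa : Q026 := (conGen rel026).mk' fa
/-- The image of `b` in `Q`. -/
def qb : Q026 := (conGen rel026).mk' fb
/-- The image of `c_n` in `Q`. -/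
def qc (n : ℕ) : Q026 := (conGen rel026).mk' (fc n)

/-- The P-portion `P = {a} ∪ {b^(2m) : m ≥ 1} ∪ {b^m c_n : m ≤ n, m + n odd}`. -/
def P026 : Set Q026 :=
  {x | x = qa} ∪
  {x | ∃ m : ℕ, 1 ≤ m ∧ x = qb ^ (2 * m)} ∪
  {x | ∃ m n : ℕ, m ≤ n ∧ (m + n) % 2 = 1 ∧ x = qb ^ m * qc n}

/-- The pretending function on single heaps. -/
noncomputable def phi026 (k : ℕ) : Q026 :=
  if k ≤ 8 then
    (if k % 4 = 1 then 1 else if k % 4 = 2 then qa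
     else if k % 4 = 3 then qb else qa * qb)
  else if k = 9 then qc 0
  else if k = 10 then qa * qc 0
  else if k % 2 = 1 then qc ((k - 9) / 2)
  else qa * qb * qc ((k - 12) / 2)

/-- The pretending function extended multiplicatively to positions. -/
noncomputable def Phi026 (G : Multiset ℕ) : Q026 := (G.map phi026).prod

/-- The monoid of invariants: `a`-parity `e`, weight `w` and level `u`. -/
@[ext]
structure Inv026 where
  e : Bool
  w : ℕ
  u : ℕ
  le : w ≤ u

namespace Inv026

instance : Mul Inv026 :=
  ⟨fun x y => ⟨xor x.e y.e, x.w + y.w, max (x.w + y.w) (max x.u y.u), le_max_left _ _⟩⟩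

instance : One Inv026 := ⟨⟨false, 0, 0, le_rfl⟩⟩

@[simp] lemma mul_e (x y : Inv026) : (x * y).e = xor x.e y.e := rfl
@[simp] lemma mul_w (x y : Inv026) : (x * y).w = x.w + y.w := rfl
@[simp] lemma mul_u (x y : Inv026) : (x * y).u = max (x.w + y.w) (max x.u y.u) := rfl
@[simp] lemma one_e : (1 : Inv026).e = false := rfl
@[simp] lemma one_w : (1 : Inv026).w = 0 := rfl
@[simp] lemma one_u : (1 : Inv026).u = 0 := rfl

instance : CommMonoid Inv026 where
  mul_assoc x y z := by
    ext
    · simp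
    · simp [add_assoc]
    · simp only [mul_u, mul_w]; omega
  one_mul x := by
    have := x.le
    ext <;> simp
    omega
  mul_one x := by
    have := x.le
    ext <;> simp
    omega
  mul_comm x y := by
    ext
    · simp [Bool.xor_comm]
    · simp [add_comm]
    · simp only [mul_u]; omega

/-- The invariants of a generator. -/
def ofGen : Gen026 → Inv026
  | .a => ⟨true, 0, 0, le_rfl⟩
  | .b => ⟨false, 1, 1, le_rfl⟩
  | .c n => ⟨false, n + 2, 2 * n + 3, by omega⟩

/-- The invariants of a word in the generators. -/
def freeHom : FM026 →* Inv026 where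
  toFun x := ((Multiplicative.toAdd x).map ofGen).prod
  map_one' := by simp
  map_mul' x y := by simp

lemma freeHom_gen (g : Gen026) : freeHom (fgen026 g) = ofGen g := by
  change (Multiset.map ofGen {g}).prod = ofGen g
  simp

lemma b_pow (i : ℕ) : ofGen .b ^ i = ⟨false, i, i, le_rfl⟩ := by
  induction i with
  | zero => rfl
  | succ k ih =>
    rw [pow_succ, ih]
    ext <;> simp [ofGen]

lemma rel_le : conGen rel026 ≤ Con.ker freeHom := by
  rw [Con.conGen_le]
  rintro x y (⟨rfl, rfl⟩ | ⟨n, rfl, rfl⟩ | ⟨m, n, h, rfl, rfl⟩) <;>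
    simp only [Con.ker_rel, map_mul, map_pow, map_one, fa, fb, fc, freeHom_gen, b_pow]
  · rfl
  · ext <;> simp [ofGen] <;> omega
  · ext <;> simp [ofGen] <;> omega

end Inv026

/-- The invariants of an element of `Q`. -/
def inv026 : Q026 →* Inv026 := Con.lift (conGen rel026) Inv026.freeHom Inv026.rel_le

lemma inv026_qa : inv026 qa = ⟨true, 0, 0, le_rfl⟩ := Inv026.freeHom_gen .a
lemma inv026_qb : inv026 qb = ⟨false, 1, 1, le_rfl⟩ := Inv026.freeHom_gen .b
lemma inv026_qc (n : ℕ) : inv026 (qc n) = ⟨false, n + 2, 2 * n + 3, by omega⟩ :=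
  Inv026.freeHom_gen (.c n)
lemma inv026_qb_pow (i : ℕ) : inv026 (qb ^ i) = ⟨false, i, i, le_rfl⟩ := by
  rw [map_pow, inv026_qb]; exact Inv026.b_pow i

lemma qa_mul_qa : qa * qa = 1 := by
  have h : conGen rel026 (fa ^ 2) 1 := ConGen.Rel.of _ _ (Or.inl ⟨rfl, rfl⟩)
  rw [pow_two] at h
  exact (Con.eq _).2 h

lemma qb_pow_mul_qc (n : ℕ) : qb ^ (n + 1) * qc n = qb ^ (2 * n + 3) := by
  have h : conGen rel026 (fb ^ (n + 1) * fc n) (fb ^ (2 * n + 3)) :=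
    ConGen.Rel.of _ _ (Or.inr (Or.inl ⟨n, rfl, rfl⟩))
  exact (Con.eq _).2 h

lemma qc_mul_qc {m n : ℕ} (hmn : m ≤ n) : qc m * qc n = qb ^ (m + 2) * qc n := by
  have h : conGen rel026 (fc m * fc n) (fb ^ (m + 2) * fc n) :=
    ConGen.Rel.of _ _ (Or.inr (Or.inr ⟨m, n, hmn, rfl, rfl⟩))
  exact (Con.eq _).2 h

/-- The normal forms not involving `a`: `b^i`, and `b^m c_n` with `m ≤ n`. -/
def IsBC026 (t : Q026) : Prop :=
  (∃ i, t = qb ^ i) ∨ ∃ m n, m ≤ n ∧ t = qb ^ m * qc n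

lemma isBC026_pow_mul (m n : ℕ) : IsBC026 (qb ^ m * qc n) := by
  rcases le_or_gt m n with h | h
  · exact Or.inr ⟨m, n, h, rfl⟩
  · obtain ⟨k, rfl⟩ := Nat.exists_eq_add_of_lt h
    refine Or.inl ⟨k + (2 * n + 3), ?_⟩
    rw [pow_add qb k, ← qb_pow_mul_qc, ← mul_assoc, ← pow_add]
    congr 2
    omega

lemma IsBC026.qb_mul {t : Q026} (h : IsBC026 t) : IsBC026 (qb * t) := by
  rcases h with ⟨i, rfl⟩ | ⟨m, n, -, rfl⟩
  · exact Or.inl ⟨i + 1, (pow_succ' _ _).symm⟩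
  · rw [← mul_assoc, ← pow_succ']
    exact isBC026_pow_mul _ _

lemma IsBC026.qc_mul {t : Q026} (h : IsBC026 t) (j : ℕ) : IsBC026 (qc j * t) := by
  rcases h with ⟨i, rfl⟩ | ⟨m, n, -, rfl⟩
  · rw [mul_comm]; exact isBC026_pow_mul _ _
  · rw [mul_left_comm]
    rcases le_total j n with h | h
    · rw [qc_mul_qc h, ← mul_assoc, ← pow_add]; exact isBC026_pow_mul _ _
    · rw [mul_comm (qc j), qc_mul_qc h, ← mul_assoc, ← pow_add]; exact isBC026_pow_mul _ _

lemma exists_normalForm (x : Q026) : ∃ t, IsBC026 t ∧ (x = t ∨ x = qa * t) := by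
  induction x using Con.induction_on with
  | H s =>
    change ∃ t, IsBC026 t ∧
      ((conGen rel026).mk' s = t ∨ (conGen rel026).mk' s = qa * t)
    induction s using Multiset.induction with
    | empty => exact ⟨1, Or.inl ⟨0, (pow_zero _).symm⟩, Or.inl (map_one _)⟩
    | cons g s ih =>
      obtain ⟨t, ht, h⟩ := ih
      have key : (conGen rel026).mk' (Multiplicative.ofAdd (g ::ₘ s)) =
          ((conGen rel026).mk' (fgen026 g) : Q026) * (conGen rel026).mk' (Multiplicative.ofAdd s) :=
        map_mul (conGen rel026).mk' (fgen026 g) (Multiplicative.ofAdd s)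
      change ∃ t, IsBC026 t ∧
        ((conGen rel026).mk' (Multiplicative.ofAdd (g ::ₘ s)) = t ∨
          (conGen rel026).mk' (Multiplicative.ofAdd (g ::ₘ s)) = qa * t)
      change (conGen rel026).mk' (Multiplicative.ofAdd s) = t ∨
          (conGen rel026).mk' (Multiplicative.ofAdd s) = qa * t at h
      rw [key]
      cases g with
      | a =>
        change ∃ t, IsBC026 t ∧ (qa * _ = t ∨ qa * _ = qa * t)
        rcases h with h | h <;> rw [h]
        · exact ⟨t, ht, Or.inr rfl⟩
        · exact ⟨t, ht, Or.inl (by rw [← mul_assoc, qa_mul_qa, one_mul])⟩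
      | b =>
        change ∃ t, IsBC026 t ∧ (qb * _ = t ∨ qb * _ = qa * t)
        rcases h with h | h <;> rw [h]
        · exact ⟨_, ht.qb_mul, Or.inl rfl⟩
        · exact ⟨_, ht.qb_mul, Or.inr (mul_left_comm _ _ _)⟩
      | c n =>
        change ∃ t, IsBC026 t ∧ (qc n * _ = t ∨ qc n * _ = qa * t)
        rcases h with h | h <;> rw [h]
        · exact ⟨_, ht.qc_mul n, Or.inl rfl⟩
        · exact ⟨_, ht.qc_mul n, Or.inr (mul_left_comm _ _ _)⟩

lemma IsBC026.e_eq {t : Q026} (h : IsBC026 t) : (inv026 t).e = false := by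
  rcases h with ⟨i, rfl⟩ | ⟨m, n, -, rfl⟩ <;> simp [inv026_qb_pow, inv026_qc]

lemma IsBC026.eq_of_inv {s t : Q026} (hs : IsBC026 s) (ht : IsBC026 t)
    (hw : (inv026 s).w = (inv026 t).w) (hu : (inv026 s).u = (inv026 t).u) : s = t := by
  rcases hs with ⟨i, rfl⟩ | ⟨m, n, hmn, rfl⟩ <;> rcases ht with ⟨j, rfl⟩ | ⟨k, l, hkl, rfl⟩ <;>
    simp only [map_mul, inv026_qb_pow, inv026_qc, Inv026.mul_w, Inv026.mul_u] at hw hu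
  · rw [hw]
  · omega
  · omega
  · obtain rfl : n = l := by omega
    obtain rfl : m = k := by omega
    rfl

/-- In `Q` the level is odd as soon as it exceeds the weight, being then `2 n + 3`; moreover
`n + 2 ≤ w`. -/
lemma inv026_shape (x : Q026) : (inv026 x).w = (inv026 x).u ∨
    ∃ l, (inv026 x).u = 2 * l + 3 ∧ l + 2 ≤ (inv026 x).w ∧ (inv026 x).w < (inv026 x).u := by
  obtain ⟨t, ⟨i, rfl⟩ | ⟨m, n, hmn, rfl⟩, rfl | rfl⟩ := exists_normalForm x <;>
    simp only [map_mul, inv026_qb_pow, inv026_qc, inv026_qa, Inv026.mul_w, Inv026.mul_u]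
  · simp
  · simp
  · exact Or.inr ⟨n, by omega⟩
  · exact Or.inr ⟨n, by omega⟩

lemma inv026_injective : Function.Injective inv026 := by
  intro x y hxy
  obtain ⟨s, hs, hx⟩ := exists_normalForm x
  obtain ⟨t, ht, hy⟩ := exists_normalForm y
  have he := congrArg Inv026.e hxy
  have hw := congrArg Inv026.w hxy
  have hu := congrArg Inv026.u hxy
  have h1 := hs.e_eq
  have h2 := ht.e_eq
  have h3 := (inv026 s).le
  have h4 := (inv026 t).le
  rcases hx with rfl | rfl <;> rcases hy with rfl | rfl <;>
    simp only [map_mul, inv026_qa, Inv026.mul_e, Inv026.mul_w, Inv026.mul_u, h1, h2] at he hw hu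
  · exact hs.eq_of_inv ht hw hu
  · simp at he
  · simp at he
  · rw [hs.eq_of_inv ht (by omega) (by omega)]

lemma mem_P026_iff (x : Q026) : x ∈ P026 ↔
    ((inv026 x).e = true ∧ (inv026 x).u = 0) ∨
    ((inv026 x).e = false ∧ (inv026 x).w = (inv026 x).u ∧ (inv026 x).w % 2 = 0 ∧
      0 < (inv026 x).w) ∨
    ((inv026 x).e = false ∧ (inv026 x).w < (inv026 x).u ∧ (inv026 x).w % 2 = 1) := by
  constructor
  · rintro ((rfl | ⟨m, hm, rfl⟩) | ⟨m, n, hmn, hodd, rfl⟩)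
    · left; simp [inv026_qa]
    · right; left
      simp only [inv026_qb_pow, true_and]; omega
    · right; right
      simp only [map_mul, inv026_qb_pow, inv026_qc, Inv026.mul_e, Inv026.mul_w, Inv026.mul_u,
        Bool.xor_false, true_and]
      omega
  · intro h
    obtain ⟨t, ⟨i, rfl⟩ | ⟨m, n, hmn, rfl⟩, rfl | rfl⟩ := exists_normalForm x <;>
      simp [inv026_qb_pow, inv026_qc, inv026_qa] at h
    · exact Or.inl (Or.inr ⟨i / 2, by omega, by congr 1; omega⟩)
    · subst h
      exact Or.inl (Or.inl (by simp))
    · exact Or.inr ⟨m, n, hmn, by omega, rfl⟩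

/-- `x` and `y` are distinguished by some multiplication into `P`. -/
def Dist026 (x y : Q026) : Prop := ∃ z : Q026, Xor (x * z ∈ P026) (y * z ∈ P026)

lemma Dist026.symm {x y : Q026} (h : Dist026 x y) : Dist026 y x := by
  obtain ⟨z, hz⟩ := h
  exact ⟨z, (xor_comm _ _).mp hz⟩

lemma Dist026.of_mul {x y : Q026} (g : Q026) (h : Dist026 (x * g) (y * g)) : Dist026 x y := by
  obtain ⟨z, hz⟩ := h
  exact ⟨g * z, by rwa [← mul_assoc, ← mul_assoc]⟩

/-- If `x` has even `a`-parity and `y` differs from it in `a`-parity or in the parity of the weight,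
the two are separated by a power of `b` large enough to raise both weights to the levels. -/
lemma dist026_of_parity {x y : Q026} (hx : (inv026 x).e = false)
    (h : (inv026 y).e = true ∨ (inv026 x).w % 2 ≠ (inv026 y).w % 2) : Dist026 x y := by
  -- The exponent has the parity of the weight of `x`, and is at least both levels and `1`.
  refine ⟨qb ^ (2 * ((inv026 x).u + (inv026 y).u + 1) + (inv026 x).w), Or.inl ⟨?_, ?_⟩⟩
  · rw [mem_P026_iff]
    right; left
    simp only [map_mul, inv026_qb_pow, Inv026.mul_e, Inv026.mul_w, Inv026.mul_u, hx]
    refine ⟨rfl, ?_, ?_, ?_⟩ <;> omega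
  · rw [mem_P026_iff]
    simp only [map_mul, inv026_qb_pow, Inv026.mul_e, Inv026.mul_w, Inv026.mul_u, Bool.xor_false]
    rcases h with h | h
    · simp [h]
    · omega

/-- The case of equal parities where `x` has the smaller gap `u - w`, or the gaps agree and `x` has
the smaller weight; up to symmetry this covers all pairs with even `a`-parity and equal weight
parity. -/
lemma dist026_same {x y : Q026} (hx : (inv026 x).e = false) (hy : (inv026 y).e = false)
    (hp : (inv026 x).w % 2 = (inv026 y).w % 2)
    (h : (inv026 x).u - (inv026 x).w < (inv026 y).u - (inv026 y).w ∨
      ((inv026 x).u - (inv026 x).w = (inv026 y).u - (inv026 y).w ∧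
        (inv026 x).w < (inv026 y).w)) : Dist026 x y := by
  have hxle := (inv026 x).le
  have hyle := (inv026 y).le
  rcases h with h | ⟨h, hlt⟩
  · by_cases h0 : (inv026 x).u = 0
    · -- Here `x = 1`, and `a` is the only element of `P` with odd `a`-parity.
      refine ⟨qa, Or.inl ⟨?_, ?_⟩⟩ <;> rw [mem_P026_iff] <;>
        simp only [map_mul, inv026_qa, Inv026.mul_e, Inv026.mul_w, Inv026.mul_u, hx, hy]
      · left; refine ⟨rfl, ?_⟩; omega
      · simp; omega
    · refine ⟨qb ^ ((inv026 x).u - (inv026 x).w), ?_⟩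
      simp only [mem_P026_iff, Xor, map_mul, inv026_qb_pow, Inv026.mul_e, Inv026.mul_w,
        Inv026.mul_u, hx, hy, Bool.xor_false, true_and, Bool.false_eq_true, false_and, false_or]
      omega
  · -- The index `j` is at least the weight of `x`, less than that of `y`, and `2 j + 3` is at
    -- least both levels when these exceed the weights.
    obtain ⟨j, hj1, hj2, hj3⟩ : ∃ j, (inv026 x).w ≤ j ∧ j < (inv026 y).w ∧
        ((inv026 y).w = (inv026 y).u ∨ (inv026 y).u ≤ 2 * j + 3) := by
      rcases inv026_shape y with h1 | ⟨l, h1, h2, h3⟩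
      · exact ⟨(inv026 x).w, le_rfl, hlt, Or.inl h1⟩
      · exact ⟨max l (inv026 x).w, by omega, by omega, by omega⟩
    refine ⟨qc j, ?_⟩
    simp only [mem_P026_iff, Xor, map_mul, inv026_qc, Inv026.mul_e, Inv026.mul_w,
      Inv026.mul_u, hx, hy, Bool.xor_false, true_and, Bool.false_eq_true, false_and, false_or]
    omega

lemma dist026_of_e_false {x y : Q026} (hxy : x ≠ y) (hx : (inv026 x).e = false) :
    Dist026 x y := by
  by_cases hpar : (inv026 y).e = true ∨ (inv026 x).w % 2 ≠ (inv026 y).w % 2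
  · exact dist026_of_parity hx hpar
  push Not at hpar
  obtain ⟨hy, hp⟩ := hpar
  have hy : (inv026 y).e = false := by simpa using hy
  have hne : ¬ ((inv026 x).w = (inv026 y).w ∧ (inv026 x).u = (inv026 y).u) := fun h =>
    hxy (inv026_injective (Inv026.ext (hx.trans hy.symm) h.1 h.2))
  have hxle := (inv026 x).le
  have hyle := (inv026 y).le
  by_cases h : (inv026 x).u - (inv026 x).w < (inv026 y).u - (inv026 y).w ∨
      ((inv026 x).u - (inv026 x).w = (inv026 y).u - (inv026 y).w ∧
        (inv026 x).w < (inv026 y).w)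
  · exact dist026_same hx hy hp h
  · exact (dist026_same hy hx hp.symm (by omega)).symm

/-- The bipartite monoid `(Q, P)` for 0.26 is reduced: any two distinct
elements are distinguished by multiplication into `P`. -/
theorem Q026_reduced :
    ∀ x y : Q026, x ≠ y → ∃ z : Q026, Xor' (x * z ∈ P026) (y * z ∈ P026) := by
  intro x y hxy
  change Dist026 x y
  cases hx : (inv026 x).e with
  | false => exact dist026_of_e_false hxy hx
  | true =>
    refine Dist026.of_mul qa (dist026_of_e_false (fun h => hxy ?_) (by simp [hx, inv026_qa]))
    simpa [mul_assoc, qa_mul_qa] using congrArg (· * qa) h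
end

section
/- For every position G of the octal game 0.26, t(G) is even if and only if the bitwise XOR, over all heaps of size k in G (with multiplicity), of the values (k-1) mod 4 lies in {0, 1}. -/
/-- The bitwise XOR of a multiset of naturals. -/
def xorSum (s : Multiset ℕ) : ℕ := s.fold (· ^^^ ·) 0

lemma t026_mod_two (k : ℕ) (hk : 1 ≤ k) : t026 k % 2 = (k - 1) % 4 / 2 := by
  unfold t026
  split_ifs <;> omega

lemma xor_lt_four_and_div_two (a b : ℕ) (ha : a < 4) (hb : b < 4) :
    (a ^^^ b) < 4 ∧ (a ^^^ b) / 2 = (a / 2 + b / 2) % 2 := by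
  interval_cases a <;> interval_cases b <;> decide

/-- The XOR of the reduced heap sizes is a two-bit number with high bit the parity of `t(G)`. The
bound `< 4` is carried along because the induction step needs it. -/
lemma xorSum_lt_four_and_div_two (G : Multiset ℕ) (hG : ∀ k ∈ G, 1 ≤ k) :
    xorSum (G.map fun k => (k - 1) % 4) < 4 ∧
      xorSum (G.map fun k => (k - 1) % 4) / 2 = tPos026 G % 2 := by
  induction G using Multiset.induction_on with
  | empty => simp [xorSum, tPos026]
  | cons k G ih =>
    obtain ⟨hlt, hdiv⟩ := ih fun j hj => hG j (Multiset.mem_cons_of_mem hj)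
    have ht := t026_mod_two k (hG k (Multiset.mem_cons_self k G))
    have hx : xorSum ((k ::ₘ G).map fun k => (k - 1) % 4) =
        ((k - 1) % 4) ^^^ xorSum (G.map fun k => (k - 1) % 4) := by
      simp [xorSum]
    have hs : tPos026 (k ::ₘ G) = t026 k + tPos026 G := by
      simp [tPos026]
    obtain ⟨h4, h2⟩ := xor_lt_four_and_div_two _ _ (Nat.mod_lt (k - 1) (by norm_num)) hlt
    rw [hx, hs]
    exact ⟨h4, by omega⟩

/-- For every position `G` of 0.26 (a finite multiset of positive heap sizes),
`t(G)` is even iff the bitwise XOR over the heaps `k` of `G` (with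
multiplicity) of the values `(k - 1) % 4` lies in `{0, 1}`. -/
theorem t026_even_iff_xor :
    ∀ G : Multiset ℕ, (∀ k ∈ G, 1 ≤ k) →
      (tPos026 G % 2 = 0 ↔
        xorSum (G.map fun k => (k - 1) % 4) ∈ ({0, 1} : Set ℕ)) := by
  intro G hG
  obtain ⟨hlt, hdiv⟩ := xorSum_lt_four_and_div_two G hG
  simp only [Set.mem_insert_iff, Set.mem_singleton_iff]
  omega
end
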